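/- Let G ↷ (X, μ) be an aperiodic pmp action of a countable group. Then for every ε > 0 there is a Borel set A ⊆ X such that the two-piece partition α = {A, X∖A} satisfies H_μ(α) < ε and every G-invariant Borel set agrees modulo a μ-null set with a set in σ_G(α). -/

import Mathlib

open MeasureTheory Set Function
open scoped ENNReal symmDiff

/-- A set in a measurable space is *analytic* if it is the image of a Borel subset of a
standard Borel space under a Borel (measurable) map. -/
def IsAnalyticS {W : Type*} [MeasurableSpace W] (A : Set W) : Prop :=
  ∃ (Z : Type) (mZ : MeasurableSpace Z), @StandardBorelSpace Z mZ ∧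
    ∃ (B : Set Z) (f : Z → W), MeasurableSet[mZ] B ∧ @Measurable Z W mZ _ f ∧ f '' B = A

/-- The smallest `G`-invariant sub-σ-algebra containing the collection `ξ`. -/
def sigmaG (G : Type*) {X : Type*} [Group G] [MulAction G X] (ξ : Set (Set X)) :
    MeasurableSpace X :=
  MeasurableSpace.generateFrom {B | ∃ (g : G), ∃ A ∈ ξ, B = (fun x => g • x) ⁻¹' A}

/-- The σ-algebra of `G`-invariant measurable sets. -/
def invSigma (G X : Type*) [Group G] [MulAction G X] [MeasurableSpace X] :
    MeasurableSpace X :=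
  MeasurableSpace.generateFrom {A | MeasurableSet A ∧ ∀ g : G, (fun x => g • x) ⁻¹' A = A}

/-- Conditional Shannon entropy `H_μ(α | m)` of a countable partition `α` given a
sub-σ-algebra `m`, valued in `[0,∞]`. -/
noncomputable def condEnt {X : Type*} (m : MeasurableSpace X) [mX : MeasurableSpace X]
    (μ : Measure X) {ι : Type*} (α : ι → Set X) : ℝ≥0∞ :=
  ∫⁻ x, ∑' i, ENNReal.ofReal
    (Real.negMulLog ((μ[(α i).indicator (fun _ => (1 : ℝ)) | m]) x)) ∂μ

/-- Shannon entropy `H_μ(α)` of a countable partition. -/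
noncomputable def shEnt {X : Type*} [MeasurableSpace X] (μ : Measure X)
    {ι : Type*} (α : ι → Set X) : ℝ≥0∞ :=
  ∑' i, ENNReal.ofReal (Real.negMulLog (μ (α i)).toReal)

/-- `α` is a countable Borel partition of `X` (indexed by `ℕ`, cells may be empty). -/
def IsPartition {X : Type*} [MeasurableSpace X] (α : ℕ → Set X) : Prop :=
  (∀ i, MeasurableSet (α i)) ∧ Pairwise (Function.onFun Disjoint α) ∧ (⋃ i, α i) = univ

/-- Every set of `ξ` agrees with an `m`-measurable set modulo `μ`-null sets. -/
def SubsetMod {X : Type*} (m : MeasurableSpace X) [mX : MeasurableSpace X] (μ : Measure X)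
    (ξ : Set (Set X)) : Prop :=
  ∀ A ∈ ξ, ∃ B, MeasurableSet[m] B ∧ μ (A ∆ B) = 0

/-- Outer Rokhlin entropy `rh_{G,μ}(ξ | F)`. -/
noncomputable def outerRokhlin (G : Type*) {X : Type*} (ξ : Set (Set X))
    (F : MeasurableSpace X) [Group G] [MulAction G X] [mX : MeasurableSpace X]
    (μ : Measure X) : ℝ≥0∞ :=
  sInf { h | ∃ α : ℕ → Set X, IsPartition α ∧
      SubsetMod (sigmaG G (Set.range α) ⊔ F ⊔ invSigma G X) μ ξ ∧
      h = condEnt (F ⊔ invSigma G X) μ α }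

/-- Rokhlin entropy `rh_G(X, μ | F)`. -/
noncomputable def rokhlin (G : Type*) {X : Type*} (F : MeasurableSpace X) [Group G]
    [MulAction G X] [mX : MeasurableSpace X] (μ : Measure X) : ℝ≥0∞ :=
  outerRokhlin G {A | MeasurableSet A} F μ

/-- Outer Rokhlin entropy `rh_{G,μ}(S | F)` of a sub-σ-algebra `S`. -/
noncomputable def outerRokhlinAlg (G : Type*) {X : Type*} (S F : MeasurableSpace X) [Group G]
    [MulAction G X] [mX : MeasurableSpace X] (μ : Measure X) : ℝ≥0∞ :=
  outerRokhlin G {A | MeasurableSet[S] A} F μ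

/-- The action of `G` on `(X, μ)` is probability-measure-preserving. -/
def IsPmp (G : Type*) {X : Type*} [Group G] [MulAction G X] [MeasurableSpace X]
    (μ : Measure X) : Prop :=
  ∀ g : G, MeasurePreserving (fun x => g • x) μ μ

/-- Aperiodicity: μ-almost-every `G`-orbit is infinite. -/
def Aperiodic (G : Type*) {X : Type*} [Group G] [MulAction G X] [MeasurableSpace X]
    (μ : Measure X) : Prop :=
  ∀ᵐ x ∂μ, (MulAction.orbit G x).Infinite

/-- Ergodicity of a measure: every invariant Borel set is null or conull. -/
def IsErgodicInv (G : Type*) {X : Type*} [Group G] [MulAction G X] [MeasurableSpace X]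
    (ν : Measure X) : Prop :=
  ∀ A : Set X, MeasurableSet A → (∀ g : G, (fun x => g • x) ⁻¹' A = A) → ν A = 0 ∨ ν A = 1

/-- `F` is a `G`-invariant σ-algebra. -/
def InvariantAlg (G : Type*) {X : Type*} (F : MeasurableSpace X) [Group G] [MulAction G X] :
    Prop :=
  ∀ (g : G) (A : Set X), MeasurableSet[F] A → MeasurableSet[F] ((fun x => g • x) ⁻¹' A)

/-- `F` is countably generated. -/
def CountablyGen {X : Type*} (F : MeasurableSpace X) : Prop :=
  ∃ S : Set (Set X), S.Countable ∧ F = MeasurableSpace.generateFrom S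

/-- `π` is an ergodic decomposition map for `μ`. -/
def IsErgDecomp (G : Type*) {X : Type*} [Group G] [MulAction G X] [MeasurableSpace X]
    (μ : Measure X) (π : X → Measure X) : Prop :=
  Measurable π ∧
  (∀ x, IsProbabilityMeasure (π x) ∧ IsPmp G (π x) ∧ IsErgodicInv G (π x)) ∧
  (∀ (g : G) (x : X), π (g • x) = π x) ∧
  (∀ ν : Measure X, IsProbabilityMeasure ν → IsPmp G ν → IsErgodicInv G ν →
      ν {x | π x = ν} = 1) ∧
  (∀ B : Set X, MeasurableSet B → μ B = ∫⁻ x, π x B ∂μ)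

/-! The conditional measures `μ(· | I)(x)`, where `I` is the σ-algebra of invariant sets, form a
Markov kernel, hence factor through an `I`-measurable `φ` with values in `(0, δ)`. Since an
invariant set `B` is a.e. equal to `{x | μ(B | I)(x) = 1}`, this `φ` generates `I` modulo null sets.
Almost every `μ(· | I)(x)` is invariant and aperiodic, hence has no atoms, so that the probability
integral transform, carried out in all fibres at once, produces a set `A` with `μ(A | I) = φ`. Its
measure is at most `δ`, which makes the entropy of `{A, Aᶜ}` small.

It remains to see that `φ` is measurable modulo null sets with respect to `S = σ_G({A, Aᶜ})`.
Because `S` is invariant, `E[· | S]` maps invariant functions to invariant functions, and a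
self-adjoint operator preserving the range of the orthogonal projection `E[· | I]` commutes with it.
Therefore `E[φ | S] = E[E[1_A | S] | I] = E[1_A | I] = φ`. -/

open ProbabilityTheory

section CondExp

variable {Ω Ω' E : Type*} [NormedAddCommGroup E] [NormedSpace ℝ E] [CompleteSpace E]

theorem condExp_comp_of_measurePreserving {m : MeasurableSpace Ω'}
    [mΩ : MeasurableSpace Ω] [mΩ' : MeasurableSpace Ω']
    {μ : Measure Ω} [IsFiniteMeasure μ] {ν : Measure Ω'} [IsFiniteMeasure ν] {T : Ω → Ω'}
    (hT : MeasurePreserving T μ ν) (hm : m ≤ mΩ') {f : Ω' → E}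
    (hf : Integrable f ν) :
    μ[f ∘ T | m.comap T] =ᵐ[μ] ν[f | m] ∘ T := by
  have hcomap : m.comap T ≤ mΩ := (MeasurableSpace.comap_mono hm).trans hT.measurable.comap_le
  refine (ae_eq_condExp_of_forall_setIntegral_eq hcomap (hT.integrable_comp_of_integrable hf)
    (fun s _ _ => (hT.integrable_comp_of_integrable integrable_condExp).integrableOn) ?_
    (stronglyMeasurable_condExp.comp_measurable (comap_measurable T)).aestronglyMeasurable).symm
  have setIntegral_preimage {h : Ω' → E} (hh : Integrable h ν) {s : Set Ω'}
      (hs : MeasurableSet s) : ∫ x in T ⁻¹' s, h (T x) ∂μ = ∫ y in s, h y ∂ν := by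
    rw [← hT.map_eq] at hh ⊢
    exact (setIntegral_map hs hh.aestronglyMeasurable hT.aemeasurable).symm
  rintro _ ⟨s, hs, rfl⟩ -
  calc ∫ x in T ⁻¹' s, (ν[f | m] ∘ T) x ∂μ = ∫ y in s, (ν[f | m]) y ∂ν :=
        setIntegral_preimage integrable_condExp (hm s hs)
    _ = ∫ y in s, f y ∂ν := setIntegral_condExp hm hf hs
    _ = ∫ x in T ⁻¹' s, (f ∘ T) x ∂μ := (setIntegral_preimage hf (hm s hs)).symm

variable {m m' mΩ : MeasurableSpace Ω} {μ : Measure Ω}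

theorem integrable_condExp_indicator_mul {s : Set Ω} {f : Ω → ℝ} (hf : Integrable f μ) :
    Integrable (μ⟦s | m⟧ * f) μ := by
  refine hf.bdd_mul (c := 1) integrable_condExp.aestronglyMeasurable ?_
  refine ae_bdd_norm_condExp_of_ae_bdd_norm (R := 1) (.of_forall fun x => ?_)
  exact (norm_indicator_le_norm_self _ x).trans (by simp)

variable [IsFiniteMeasure μ]

theorem integral_mul_condExp (hm : m ≤ mΩ) {u v : Ω → ℝ} (hu : AEStronglyMeasurable[m] u μ)
    (huv : Integrable (u * v) μ) (hv : Integrable v μ) :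
    ∫ x, u x * (μ[v | m]) x ∂μ = ∫ x, u x * v x ∂μ := by
  rw [← integral_condExp hm (f := fun x => u x * v x)]
  exact integral_congr_ae (condExp_mul_of_aestronglyMeasurable_left hu huv hv).symm

theorem setIntegral_condExp_eq_integral_mul (hm : m ≤ mΩ) {s : Set Ω} (hs : MeasurableSet s)
    {f : Ω → ℝ} (hf : Integrable f μ) :
    ∫ x in s, (μ[f | m]) x ∂μ = ∫ x, (μ⟦s | m⟧) x * f x ∂μ := by
  have hind : Integrable (s.indicator fun _ => (1 : ℝ)) μ := (integrable_const 1).indicator hs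
  have indicator_eq : s.indicator (μ[f | m]) = μ[f | m] * s.indicator fun _ => (1 : ℝ) := by
    ext x; by_cases hx : x ∈ s <;> simp [hx]
  calc ∫ x in s, (μ[f | m]) x ∂μ
      = ∫ x, (μ[f | m]) x * s.indicator (fun _ => (1 : ℝ)) x ∂μ := by
        rw [← integral_indicator hs, indicator_eq]; rfl
    _ = ∫ x, (μ[f | m]) x * (μ⟦s | m⟧) x ∂μ := by
        refine (integral_mul_condExp hm stronglyMeasurable_condExp.aestronglyMeasurable ?_
          hind).symm
        exact indicator_eq ▸ integrable_condExp.indicator hs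
    _ = ∫ x, (μ⟦s | m⟧) x * (μ[f | m]) x ∂μ := by simp only [mul_comm]
    _ = ∫ x, (μ⟦s | m⟧) x * f x ∂μ :=
        integral_mul_condExp hm stronglyMeasurable_condExp.aestronglyMeasurable
          (integrable_condExp_indicator_mul hf) hf

theorem condExp_condExp_comm (hm : m ≤ mΩ) (hm' : m' ≤ mΩ)
    (hmap : ∀ u : Ω → ℝ, Integrable u μ → StronglyMeasurable[m] u →
      AEStronglyMeasurable[m] (μ[u | m']) μ)
    {f : Ω → ℝ} (hf : Integrable f μ) :
    μ[μ[f | m] | m'] =ᵐ[μ] μ[μ[f | m'] | m] := by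
  refine ae_eq_condExp_of_forall_setIntegral_eq hm integrable_condExp
    (fun s _ _ => integrable_condExp.integrableOn) (fun s hs _ => ?_)
    (hmap _ integrable_condExp stronglyMeasurable_condExp)
  have hs' : AEStronglyMeasurable[m] (μ⟦s | m'⟧) μ :=
    hmap _ ((integrable_const 1).indicator (hm s hs)) (stronglyMeasurable_const.indicator hs)
  calc ∫ x in s, (μ[μ[f | m] | m']) x ∂μ
      = ∫ x, (μ⟦s | m'⟧) x * (μ[f | m]) x ∂μ :=
        setIntegral_condExp_eq_integral_mul hm' (hm s hs) integrable_condExp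
    _ = ∫ x, (μ⟦s | m'⟧) x * f x ∂μ :=
        integral_mul_condExp hm hs' (integrable_condExp_indicator_mul hf) hf
    _ = ∫ x in s, (μ[f | m']) x ∂μ :=
        (setIntegral_condExp_eq_integral_mul hm' (hm s hs) hf).symm

end CondExp

section InvariantSigmaAlgebra

variable {G X : Type*} [Group G] [MulAction G X]

theorem InvariantAlg.comap_smul_eq {F : MeasurableSpace X} (hF : InvariantAlg G F) (g : G) :
    F.comap (fun x => g • x) = F := by
  refine le_antisymm ?_ fun s hs => ⟨_, hF g⁻¹ s hs, ?_⟩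
  · rintro _ ⟨s, hs, rfl⟩
    exact hF g s hs
  · ext x; simp

theorem invariantAlg_sigmaG (ξ : Set (Set X)) : InvariantAlg G (sigmaG G ξ) := by
  intro g
  refine @measurable_generateFrom X X (sigmaG G ξ) _ _ ?_
  rintro _ ⟨h, A, hA, rfl⟩
  refine MeasurableSpace.measurableSet_generateFrom ⟨h * g, A, hA, ?_⟩
  ext x; simp [mul_smul]

theorem measurableSet_sigmaG_of_mem {ξ : Set (Set X)} {A : Set X} (hA : A ∈ ξ) :
    MeasurableSet[sigmaG G ξ] A :=
  MeasurableSpace.measurableSet_generateFrom ⟨1, A, hA, by simp⟩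

variable {S : MeasurableSpace X} [mX : MeasurableSpace X]

theorem sigmaG_le [MeasurableConstSMul G X] {ξ : Set (Set X)} (hξ : ∀ A ∈ ξ, MeasurableSet A) :
    sigmaG G ξ ≤ mX := by
  refine MeasurableSpace.generateFrom_le ?_
  rintro _ ⟨g, A, hA, rfl⟩
  exact measurable_const_smul g (hξ A hA)

theorem measurableSet_invSigma_iff {s : Set X} :
    MeasurableSet[invSigma G X] s ↔
      MeasurableSet s ∧ ∀ g : G, (fun x => g • x) ⁻¹' s = s := by
  refine ⟨fun hs => ?_, fun hs => MeasurableSpace.measurableSet_generateFrom hs⟩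
  induction s, hs using MeasurableSpace.generateFrom_induction with
  | hC _ ht _ => exact ht
  | empty => simp
  | compl t _ ht => exact ⟨ht.1.compl, fun g => by rw [preimage_compl, ht.2 g]⟩
  | iUnion f _ hf =>
    exact ⟨.iUnion fun n => (hf n).1, fun g => by simp only [preimage_iUnion, (hf _).2 g]⟩

theorem invSigma_le : invSigma G X ≤ mX := fun _ hs => (measurableSet_invSigma_iff.1 hs).1

theorem comp_smul_eq_of_measurable_invSigma {β : Type*} [MeasurableSpace β]
    [MeasurableSingletonClass β] {f : X → β} (hf : Measurable[invSigma G X] f) (g : G) :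
    f ∘ (fun x => g • x) = f := by
  ext x
  have hfiber := (measurableSet_invSigma_iff.1 (hf (measurableSet_singleton (f x)))).2 g
  exact (Set.ext_iff.1 hfiber x).2 rfl

theorem aestronglyMeasurable_invSigma_of_ae_invariant [Countable G] [MeasurableConstSMul G X]
    {μ : Measure X} {k : X → ℝ} (hk : Measurable k)
    (hinv : ∀ g : G, k ∘ (fun x => g • x) =ᵐ[μ] k) :
    AEStronglyMeasurable[invSigma G X] k μ := by
  let X₀ : Set X := {x | ∀ g : G, k (g • x) = k x}
  have hX₀ : MeasurableSet X₀ := by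
    simp only [X₀, ofPred_forall]
    exact .iInter fun g => measurableSet_eq_fun (hk.comp (measurable_const_smul g)) hk
  have mem_smul_iff (g : G) (x : X) : g • x ∈ X₀ ↔ x ∈ X₀ := by
    refine ⟨fun hx h => ?_, fun hx h => ?_⟩
    · simpa [mul_smul] using (hx (h * g⁻¹)).trans (hx g⁻¹).symm
    · simpa [mul_smul] using (hx (h * g)).trans (hx g).symm
  have indicator_smul (g : G) (x : X) : X₀.indicator k (g • x) = X₀.indicator k x := by
    by_cases hx : x ∈ X₀
    · simp [hx, mem_smul_iff, hx g]
    · simp [hx, mem_smul_iff]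
  have hmeas : Measurable[invSigma G X] (X₀.indicator k) := fun s hs =>
    measurableSet_invSigma_iff.2 ⟨hk.indicator hX₀ hs, fun g => by ext x; simp [indicator_smul]⟩
  refine ⟨X₀.indicator k, hmeas.stronglyMeasurable, ?_⟩
  filter_upwards [ae_all_iff.2 hinv] with x hx
  exact (indicator_of_mem (show x ∈ X₀ from hx) k).symm

variable {μ : Measure X} [IsFiniteMeasure μ]

theorem condExp_comp_smul_of_invariantAlg (hpmp : IsPmp G μ) (hSX : S ≤ mX) (hS : InvariantAlg G S)
    {E : Type*} [NormedAddCommGroup E] [NormedSpace ℝ E] [CompleteSpace E] {f : X → E}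
    (hf : Integrable f μ) (g : G) :
    μ[f ∘ (fun x => g • x) | S] =ᵐ[μ] μ[f | S] ∘ fun x => g • x := by
  have := condExp_comp_of_measurePreserving (hpmp g) hSX hf
  rwa [hS.comap_smul_eq] at this

theorem condExp_condExp_invSigma [Countable G] (hpmp : IsPmp G μ) (hSX : S ≤ mX)
    (hS : InvariantAlg G S) {f : X → ℝ} (hf : Integrable f μ) (hfS : StronglyMeasurable[S] f) :
    μ[μ[f | invSigma G X] | S] =ᵐ[μ] μ[f | invSigma G X] := by
  have : MeasurableConstSMul G X := ⟨fun g => (hpmp g).measurable⟩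
  have hcomm : μ[μ[f | invSigma G X] | S] =ᵐ[μ] μ[μ[f | S] | invSigma G X] := by
    refine condExp_condExp_comm invSigma_le hSX (fun u hu hinv => ?_) hf
    refine aestronglyMeasurable_invSigma_of_ae_invariant
      (stronglyMeasurable_condExp.mono hSX).measurable fun g => ?_
    have := condExp_comp_smul_of_invariantAlg hpmp hSX hS hu g
    rw [comp_smul_eq_of_measurable_invSigma hinv.measurable] at this
    exact this.symm
  rwa [condExp_of_stronglyMeasurable hSX hfS hf] at hcomm

theorem aestronglyMeasurable_condExp_indicator_sigmaG [Countable G] (hpmp : IsPmp G μ)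
    {ξ : Set (Set X)} (hξ : ∀ A ∈ ξ, MeasurableSet A) {A : Set X} (hA : A ∈ ξ) :
    AEStronglyMeasurable[sigmaG G ξ] (μ⟦A | invSigma G X⟧) μ := by
  have : MeasurableConstSMul G X := ⟨fun g => (hpmp g).measurable⟩
  have hind : StronglyMeasurable[sigmaG G ξ] (A.indicator fun _ => (1 : ℝ)) :=
    stronglyMeasurable_const.indicator (measurableSet_sigmaG_of_mem hA)
  exact ⟨_, stronglyMeasurable_condExp, (condExp_condExp_invSigma hpmp (sigmaG_le hξ)
    (invariantAlg_sigmaG ξ) ((integrable_const 1).indicator (hξ A hA)) hind).symm⟩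

end InvariantSigmaAlgebra

section Atoms

variable {G X : Type*} [Group G] [MulAction G X] [MeasurableSpace X]

theorem IsPmp.measure_singleton_smul [MeasurableSingletonClass X] {ν : Measure X}
    (hpmp : IsPmp G ν) (g : G) (x : X) : ν {g • x} = ν {x} := by
  rw [← (hpmp g).measure_preimage (measurableSet_singleton _).nullMeasurableSet]
  congr 1
  ext y
  simp

theorem IsPmp.nullSingletonClass [MeasurableSingletonClass X] {ν : Measure X}
    [IsFiniteMeasure ν] (hpmp : IsPmp G ν) (hap : Aperiodic G ν) : NullSingletonClass ν := by
  refine ⟨fun x => ?_⟩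
  by_contra hx
  have orbit_infinite : (MulAction.orbit G x).Infinite := by
    by_contra hfin
    exact hx (measure_mono_null (singleton_subset_iff.2 hfin) (ae_iff.1 hap))
  refine measure_ne_top ν _ (orbit_infinite.meas_eq_top ⟨ν {x}, hx, ?_⟩)
  rintro _ ⟨g, rfl⟩
  exact (hpmp.measure_singleton_smul g x).ge

end Atoms

section CondExpKernel

variable {Ω : Type*} {m : MeasurableSpace Ω} [mΩ : MeasurableSpace Ω]

theorem measurable_prodMk_self (hm : m ≤ mΩ) :
    Measurable[mΩ, m.prod mΩ] fun x : Ω => (x, x) :=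
  (measurable_id'' hm).prodMk measurable_id

variable [StandardBorelSpace Ω] {μ : Measure Ω} [IsFiniteMeasure μ]

theorem compProd_trim_condExpKernel_apply (hm : m ≤ mΩ) {D : Set (Ω × Ω)}
    (hD : MeasurableSet[m.prod mΩ] D) :
    (μ.trim hm ⊗ₘ condExpKernel μ m) D = μ {x | (x, x) ∈ D} := by
  rw [compProd_trim_condExpKernel]
  exact Measure.map_apply (measurable_prodMk_self hm) hD

theorem ae_measurePreserving_condExpKernel (hm : m ≤ mΩ) {T : Ω → Ω}
    (hT : MeasurePreserving T μ μ) (hinv : ∀ s, MeasurableSet[m] s → T ⁻¹' s = s) :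
    ∀ᵐ x ∂μ, MeasurePreserving T (condExpKernel μ m x) (condExpKernel μ m x) := by
  have compProd_eq : μ.trim hm ⊗ₘ (condExpKernel μ m).map T = μ.trim hm ⊗ₘ condExpKernel μ m := by
    refine Measure.ext_prod fun {s t} hs ht => ?_
    calc (μ.trim hm ⊗ₘ (condExpKernel μ m).map T) (s ×ˢ t)
        = (μ.trim hm ⊗ₘ condExpKernel μ m) (s ×ˢ (T ⁻¹' t)) := by
          simp only [Measure.compProd_apply_prod hs ht,
            Measure.compProd_apply_prod hs (hT.measurable ht),
            Kernel.map_apply' _ hT.measurable _ ht]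
      _ = μ (s ∩ T ⁻¹' t) := compProd_trim_condExpKernel_apply hm (hs.prod (hT.measurable ht))
      _ = μ (T ⁻¹' (s ∩ t)) := by rw [preimage_inter, hinv s hs]
      _ = μ (s ∩ t) := hT.measure_preimage ((hm s hs).inter ht).nullMeasurableSet
      _ = (μ.trim hm ⊗ₘ condExpKernel μ m) (s ×ˢ t) :=
          (compProd_trim_condExpKernel_apply hm (hs.prod ht)).symm
  filter_upwards [ae_of_ae_trim hm (Kernel.ae_eq_of_compProd_eq compProd_eq)] with x hx
  exact ⟨hT.measurable, by rw [← Kernel.map_apply _ hT.measurable, hx]⟩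

theorem ae_ae_condExpKernel (hm : m ≤ mΩ) {p : Ω → Prop} (hp : ∀ᵐ x ∂μ, p x) :
    ∀ᵐ x ∂μ, ∀ᵐ y ∂condExpKernel μ m x, p y := by
  rw [← condExpKernel_comp_trim (μ := μ) hm] at hp
  exact ae_of_ae_trim hm (Measure.ae_ae_of_ae_comp hp)

end CondExpKernel

section InvariantCondExpKernel

variable {G X : Type*} [Group G] [Countable G] [MulAction G X] [MeasurableSpace X]
  [StandardBorelSpace X] {μ : Measure X} [IsFiniteMeasure μ]

theorem ae_isPmp_condExpKernel_invSigma (hpmp : IsPmp G μ) :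
    ∀ᵐ x ∂μ, IsPmp G (condExpKernel μ (invSigma G X) x) :=
  ae_all_iff.2 fun g => ae_measurePreserving_condExpKernel invSigma_le (hpmp g)
    fun _ hs => (measurableSet_invSigma_iff.1 hs).2 g

theorem ae_nullSingletonClass_condExpKernel_invSigma (hpmp : IsPmp G μ) (hap : Aperiodic G μ) :
    ∀ᵐ x ∂μ, NullSingletonClass (condExpKernel μ (invSigma G X) x) := by
  filter_upwards [ae_isPmp_condExpKernel_invSigma hpmp,
      ae_ae_condExpKernel (invSigma_le (G := G)) hap]
    with x hpmpx hapx
  exact hpmpx.nullSingletonClass hapx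

end InvariantCondExpKernel

section ProbabilityIntegralTransform

theorem continuous_cdf (ν : Measure ℝ) [IsProbabilityMeasure ν] [NullSingletonClass ν] :
    Continuous (cdf ν) := by
  refine continuous_iff_continuousAt.2 fun t => ?_
  rw [(monotone_cdf ν).continuousAt_iff_leftLim_eq_rightLim, StieltjesFunction.rightLim_eq]
  have jump_eq_zero := (cdf ν).measure_singleton t
  rw [measure_cdf, measure_singleton, eq_comm, ENNReal.ofReal_eq_zero, sub_nonpos] at jump_eq_zero
  exact le_antisymm ((monotone_cdf ν).leftLim_le le_rfl) jump_eq_zero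

theorem measureReal_setOf_cdf_le_of_mem_Ioo (ν : Measure ℝ) [IsProbabilityMeasure ν]
    [NullSingletonClass ν] {c : ℝ} (hc : c ∈ Ioo 0 1) : ν.real {t | cdf ν t ≤ c} = c := by
  have lt_of_cdf_lt {s t : ℝ} (h : cdf ν s < cdf ν t) : s < t := (monotone_cdf ν).reflect_lt h
  obtain ⟨a, ha⟩ := ((tendsto_cdf_atBot ν).eventually_lt_const hc.1).exists
  obtain ⟨b, hb⟩ := ((tendsto_cdf_atTop ν).eventually_const_lt hc.2).exists
  let L := {t | cdf ν t ≤ c}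
  have bddAbove : BddAbove L := ⟨b, fun t ht => (lt_of_cdf_lt (ht.trans_lt hb)).le⟩
  have isClosed : IsClosed L := isClosed_le (continuous_cdf ν) continuous_const
  obtain ⟨t₀, ht₀⟩ : ∃ t, cdf ν t = c :=
    mem_range_of_exists_le_of_exists_ge (continuous_cdf ν) ⟨a, ha.le⟩ ⟨b, hb.le⟩
  have sSup_mem : sSup L ∈ L := isClosed.csSup_mem ⟨t₀, ht₀.le⟩ bddAbove
  have L_eq : L = Iic (sSup L) :=
    Subset.antisymm (fun t ht => le_csSup bddAbove ht)
      fun t ht => (monotone_cdf ν ht).trans sSup_mem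
  have cdf_sSup : cdf ν (sSup L) = c :=
    le_antisymm sSup_mem (ht₀ ▸ monotone_cdf ν (le_csSup bddAbove ht₀.le))
  change ν.real L = c
  rw [L_eq, ← cdf_eq_real, cdf_sSup]

theorem measureReal_setOf_cdf_le (ν : Measure ℝ) [IsProbabilityMeasure ν] [NullSingletonClass ν]
    {c : ℝ} (hc : c ∈ Icc 0 1) : ν.real {t | cdf ν t ≤ c} = c := by
  rcases eq_endpoints_or_mem_Ioo_of_mem_Icc hc with rfl | rfl | hc
  · refine le_antisymm (le_of_forall_gt_imp_ge_of_dense fun c hc0 => ?_) measureReal_nonneg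
    rcases lt_or_ge c 1 with hc1 | hc1
    · rw [← measureReal_setOf_cdf_le_of_mem_Ioo ν ⟨hc0, hc1⟩]
      exact measureReal_mono fun t (ht : cdf ν t ≤ 0) => ht.trans hc0.le
    · exact measureReal_le_one.trans hc1
  · simp [cdf_le_one]
  · exact measureReal_setOf_cdf_le_of_mem_Ioo ν hc

theorem measureReal_setOf_measureReal_preimage_Iic_le {X : Type*} [MeasurableSpace X]
    {ν : Measure X} [IsProbabilityMeasure ν] [NullSingletonClass ν] {F : X → ℝ}
    (hF : MeasurableEmbedding F) {c : ℝ} (hc : c ∈ Icc 0 1) :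
    ν.real {x | ν.real (F ⁻¹' Iic (F x)) ≤ c} = c := by
  have : IsProbabilityMeasure (ν.map F) :=
    Measure.isProbabilityMeasure_map hF.measurable.aemeasurable
  have : NullSingletonClass (ν.map F) := ⟨fun t => by
    rw [hF.map_apply]
    exact (subsingleton_singleton.preimage hF.injective).measure_zero ν⟩
  have cdf_map (t : ℝ) : cdf (ν.map F) t = ν.real (F ⁻¹' Iic t) := by
    rw [cdf_eq_real, map_measureReal_apply hF.measurable measurableSet_Iic]
  have := measureReal_setOf_cdf_le (ν.map F) hc
  rwa [measureReal_def, hF.map_apply, ← measureReal_def, preimage_ofPred_eq,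
    funext cdf_map] at this

end ProbabilityIntegralTransform

section PrescribedCondExp

variable {Ω : Type*} {m : MeasurableSpace Ω} [mΩ : MeasurableSpace Ω] [StandardBorelSpace Ω]
  {μ : Measure Ω} [IsFiniteMeasure μ]

theorem condExp_indicator_diag_ae_eq (hm : m ≤ mΩ) {D : Set (Ω × Ω)}
    (hD : MeasurableSet[m.prod mΩ] D) :
    μ⟦{x | (x, x) ∈ D} | m⟧ =ᵐ[μ] fun x => (condExpKernel μ m x).real {y | (x, y) ∈ D} := by
  let w (x : Ω) : ℝ≥0∞ := condExpKernel μ m x {y | (x, y) ∈ D}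
  have hw : Measurable[m] w := Kernel.measurable_kernel_prodMk_left hD
  have hA : MeasurableSet {x | (x, x) ∈ D} := measurable_prodMk_self hm hD
  have setLIntegral_w {s : Set Ω} (hs : MeasurableSet[m] s) :
      ∫⁻ x in s, w x ∂μ = μ ({x | (x, x) ∈ D} ∩ s) := by
    have hDs : MeasurableSet[m.prod mΩ] (D ∩ Prod.fst ⁻¹' s) := hD.inter (measurable_fst hs)
    calc ∫⁻ x in s, w x ∂μ = ∫⁻ x in s, w x ∂μ.trim hm := (setLIntegral_trim hm hw hs).symm
      _ = ∫⁻ x, condExpKernel μ m x {y | (x, y) ∈ D ∩ Prod.fst ⁻¹' s} ∂μ.trim hm := by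
          rw [← lintegral_indicator hs]
          congr with x
          by_cases hx : x ∈ s <;> simp [w, hx]
      _ = (μ.trim hm ⊗ₘ condExpKernel μ m) (D ∩ Prod.fst ⁻¹' s) :=
          (Measure.compProd_apply hDs).symm
      _ = μ ({x | (x, x) ∈ D} ∩ s) := compProd_trim_condExpKernel_apply hm hDs
  have integrable_w : Integrable (fun x => (w x).toReal) μ :=
    integrable_toReal_of_lintegral_ne_top (hw.mono hm le_rfl).aemeasurable
      (by simpa using (setLIntegral_w .univ).trans_ne (measure_ne_top μ _))
  refine (ae_eq_condExp_of_forall_setIntegral_eq hm ((integrable_const 1).indicator hA)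
    (fun s _ _ => integrable_w.integrableOn) (fun s hs _ => ?_)
    hw.ennreal_toReal.aestronglyMeasurable).symm
  calc ∫ x in s, (w x).toReal ∂μ = μ.real ({x | (x, x) ∈ D} ∩ s) := by
        rw [integral_toReal (hw.mono hm le_rfl).aemeasurable
          (.of_forall fun x => measure_lt_top _ _), setLIntegral_w hs, measureReal_def]
    _ = ∫ x in s, {x | (x, x) ∈ D}.indicator (fun _ => (1 : ℝ)) x ∂μ := by
        rw [integral_indicator_const _ hA, measureReal_restrict_apply hA, smul_eq_mul, mul_one]

theorem exists_condExp_indicator_ae_eq (hm : m ≤ mΩ)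
    (hnull : ∀ᵐ x ∂μ, NullSingletonClass (condExpKernel μ m x)) {φ : Ω → ℝ}
    (hφ : Measurable[m] φ) (hφ_mem : ∀ x, φ x ∈ Icc 0 1) :
    ∃ A, MeasurableSet A ∧ μ⟦A | m⟧ =ᵐ[μ] φ := by
  let κ := condExpKernel μ m
  let F := embeddingReal Ω
  have hF : MeasurableEmbedding F := measurableEmbedding_embeddingReal Ω
  let D : Set (Ω × Ω) := {p | (κ p.1).real (F ⁻¹' Iic (F p.2)) ≤ φ p.1}
  have hD : MeasurableSet[m.prod mΩ] D := by
    let κ' : @Kernel (Ω × Ω) Ω (m.prod mΩ) mΩ := κ.comap Prod.fst measurable_fst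
    have hle : MeasurableSet[(m.prod mΩ).prod mΩ] {q : (Ω × Ω) × Ω | F q.2 ≤ F q.1.2} :=
      measurableSet_le (hF.measurable.comp measurable_snd)
        (hF.measurable.comp (measurable_snd.comp measurable_fst))
    exact measurableSet_le (Kernel.measurable_kernel_prodMk_left (κ := κ') hle).ennreal_toReal
      (hφ.comp measurable_fst)
  have hA : MeasurableSet {x | (x, x) ∈ D} := measurable_prodMk_self hm hD
  refine ⟨{x | (x, x) ∈ D}, hA, ?_⟩
  filter_upwards [condExp_indicator_diag_ae_eq hm hD, hnull] with x hx hnullx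
  exact hx.trans (measureReal_setOf_measureReal_preimage_Iic_le hF (hφ_mem x))

end PrescribedCondExp

section RealGenerator

theorem exists_measurableEmbedding_Ioo (Y : Type*) [MeasurableSpace Y] [StandardBorelSpace Y]
    {a b : ℝ} (hab : a < b) : ∃ e : Y → ℝ, MeasurableEmbedding e ∧ ∀ y, e y ∈ Ioo a b := by
  let e (y : Y) : ℝ := a + (b - a) * Real.sigmoid (embeddingReal Y y)
  have hab' : 0 < b - a := sub_pos.2 hab
  have injective_e : Injective e :=
    (add_right_injective a).comp <| (mul_right_injective₀ hab'.ne').comp <|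
      Real.sigmoid_injective.comp (measurableEmbedding_embeddingReal Y).injective
  have measurable_e : Measurable e := by
    have := (measurableEmbedding_embeddingReal Y).measurable
    fun_prop
  refine ⟨e, measurable_e.measurableEmbedding injective_e, fun y => ⟨?_, ?_⟩⟩
  · exact lt_add_of_pos_right a (mul_pos hab' (Real.sigmoid_pos _))
  · have := mul_lt_of_lt_one_right hab' (Real.sigmoid_lt_one (embeddingReal Y y))
    exact lt_sub_iff_add_lt'.1 this

theorem exists_measurable_comap_of_isMarkovKernel {α β : Type*} {mα : MeasurableSpace α}
    {mβ : MeasurableSpace β} [MeasurableSpace.CountablyGenerated β] (κ : Kernel α β)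
    [IsMarkovKernel κ] {a b : ℝ} (hab : a < b) :
    ∃ φ : α → ℝ, Measurable φ ∧ (∀ x, φ x ∈ Ioo a b) ∧
      Measurable[MeasurableSpace.comap φ inferInstance] κ := by
  let 𝒜 : Set (Set β) := generateSetAlgebra (MeasurableSpace.countableGeneratingSet β)
  have : Countable 𝒜 :=
    (countable_generateSetAlgebra (MeasurableSpace.countable_countableGeneratingSet)).to_subtype
  have generateFrom_𝒜 : mβ = MeasurableSpace.generateFrom 𝒜 := by
    rw [generateFrom_generateSetAlgebra_eq, MeasurableSpace.generateFrom_countableGeneratingSet]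
  have measurableSet_of_mem (s : 𝒜) : MeasurableSet (s : Set β) :=
    generateFrom_𝒜 ▸ MeasurableSpace.measurableSet_generateFrom s.2
  obtain ⟨e, he, he_mem⟩ := exists_measurableEmbedding_Ioo (𝒜 → ℝ≥0∞) hab
  let ψ : α → 𝒜 → ℝ≥0∞ := fun x s => κ x s
  have hψ : Measurable ψ :=
    measurable_pi_lambda _ fun s => κ.measurable_coe (measurableSet_of_mem s)
  refine ⟨e ∘ ψ, he.measurable.comp hψ, fun x => he_mem _, ?_⟩
  rw [← MeasurableSpace.comap_comp, he.comap_eq]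
  refine @Measurable.measure_of_isPiSystem_of_isProbabilityMeasure _ _ (_) _ κ _ 𝒜 generateFrom_𝒜
    isSetAlgebra_generateSetAlgebra.isSetRing.isSetSemiring.isPiSystem fun s hs => ?_
  exact (measurable_pi_apply (⟨s, hs⟩ : 𝒜)).comp (comap_measurable ψ)

theorem ae_eq_setOf_condExpKernel_eq_one {Ω : Type*} {m : MeasurableSpace Ω}
    [mΩ : MeasurableSpace Ω] [StandardBorelSpace Ω] {μ : Measure Ω} [IsFiniteMeasure μ]
    (hm : m ≤ mΩ) {s : Set Ω} (hs : MeasurableSet[m] s) :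
    s =ᵐ[μ] {x | condExpKernel μ m x s = 1} := by
  have hind : (fun x => (condExpKernel μ m x).real s) =ᵐ[μ] s.indicator fun _ => (1 : ℝ) := by
    have := condExpKernel_ae_eq_condExp (μ := μ) hm (hm s hs)
    rwa [condExp_of_stronglyMeasurable hm (stronglyMeasurable_const.indicator hs)
      ((integrable_const _).indicator (hm s hs))] at this
  refine Filter.eventuallyEq_set.2 ?_
  filter_upwards [hind] with x hx
  rw [← ENNReal.toReal_eq_one_iff, ← measureReal_def, hx]
  exact (indicator_eq_one_iff_mem ℝ).symm

theorem exists_measurable_subsetMod_comap {Ω : Type*} {m : MeasurableSpace Ω}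
    [mΩ : MeasurableSpace Ω] [StandardBorelSpace Ω] (μ : Measure Ω) [IsFiniteMeasure μ]
    (hm : m ≤ mΩ) {a b : ℝ} (hab : a < b) :
    ∃ φ : Ω → ℝ, Measurable[m] φ ∧ (∀ x, φ x ∈ Ioo a b) ∧
      SubsetMod (MeasurableSpace.comap φ inferInstance) μ {s | MeasurableSet[m] s} := by
  obtain ⟨φ, hφ, hφ_mem, hκ⟩ := exists_measurable_comap_of_isMarkovKernel (condExpKernel μ m) hab
  refine ⟨φ, hφ, hφ_mem, fun s hs => ⟨{x | condExpKernel μ m x s = 1}, ?_, ?_⟩⟩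
  · exact (Measure.measurable_coe (hm s hs)).comp hκ (measurableSet_singleton 1)
  · exact measure_symmDiff_eq_zero_iff.2 (ae_eq_setOf_condExpKernel_eq_one hm hs)

theorem SubsetMod.of_comap_of_aestronglyMeasurable {Ω : Type*} {S : MeasurableSpace Ω}
    [mΩ : MeasurableSpace Ω] {μ : Measure Ω} {ξ : Set (Set Ω)} {φ : Ω → ℝ}
    (hξ : SubsetMod (MeasurableSpace.comap φ inferInstance) μ ξ)
    (hφ : AEStronglyMeasurable[S] φ μ) : SubsetMod S μ ξ := by
  intro A hA
  obtain ⟨_, ⟨E, hE, rfl⟩, hAE⟩ := hξ A hA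
  refine ⟨hφ.mk φ ⁻¹' E, hφ.stronglyMeasurable_mk.measurable hE, ?_⟩
  rw [measure_symmDiff_eq_zero_iff] at hAE ⊢
  exact hAE.trans (hφ.ae_eq_mk.preimage E)

end RealGenerator

section Entropy

theorem ofReal_negMulLog_add_compl {Ω : Type*} [MeasurableSpace Ω] (μ : Measure Ω)
    [IsProbabilityMeasure μ] {A : Set Ω} (hA : MeasurableSet A) :
    ENNReal.ofReal (Real.negMulLog (μ A).toReal) + ENNReal.ofReal (Real.negMulLog (μ Aᶜ).toReal) =
      ENNReal.ofReal (Real.binEntropy (μ.real A)) := by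
  rw [← measureReal_def, ← measureReal_def, ← ENNReal.ofReal_add
    (Real.negMulLog_nonneg measureReal_nonneg measureReal_le_one)
    (Real.negMulLog_nonneg measureReal_nonneg measureReal_le_one),
    probReal_compl_eq_one_sub hA, Real.binEntropy_eq_negMulLog_add_negMulLog_one_sub]

theorem measureReal_le_of_condExp_indicator_le {Ω : Type*} {m mΩ : MeasurableSpace Ω}
    {μ : Measure Ω} [IsProbabilityMeasure μ] (hm : m ≤ mΩ) {A : Set Ω} (hA : MeasurableSet A)
    {c : ℝ} (hc : ∀ᵐ x ∂μ, (μ⟦A | m⟧) x ≤ c) : μ.real A ≤ c := by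
  calc μ.real A = ∫ x, (μ⟦A | m⟧) x ∂μ := by
        rw [integral_condExp hm, integral_indicator_const _ hA, smul_eq_mul, mul_one]
    _ ≤ ∫ _, c ∂μ := integral_mono_ae integrable_condExp (integrable_const c) hc
    _ = c := by simp

theorem exists_forall_mem_Icc_binEntropy_lt {ε : ℝ} (hε : 0 < ε) :
    ∃ δ ∈ Ioo (0 : ℝ) 1, ∀ p ∈ Icc 0 δ, Real.binEntropy p < ε := by
  have small_near_zero : ∀ᶠ p in nhds (0 : ℝ), Real.binEntropy p < ε :=
    Real.binEntropy_continuous.continuousAt.eventually_lt_const (by simpa using hε)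
  obtain ⟨δ, hδε, hδ⟩ := ((small_near_zero.filter_mono nhdsWithin_le_nhds).and
    (Ioo_mem_nhdsGT (show (0 : ℝ) < 2⁻¹ by norm_num))).exists
  refine ⟨δ, ⟨hδ.1, hδ.2.trans (by norm_num)⟩, fun p hp => lt_of_le_of_lt ?_ hδε⟩
  exact Real.binEntropy_strictMonoOn.monotoneOn ⟨hp.1, hp.2.trans hδ.2.le⟩
    ⟨hδ.1.le, hδ.2.le⟩ hp.2

end Entropy

/-- Corollary 3.8: for an aperiodic pmp action, there are two-piece
partitions of arbitrarily small Shannon entropy over which all invariant sets are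
measurable modulo null sets. -/
theorem statement5 {G X : Type*} [Group G] [Countable G]
    [mX : MeasurableSpace X] [StandardBorelSpace X] [MulAction G X]
    (μ : Measure X) [IsProbabilityMeasure μ] (hpmp : IsPmp G μ) (hap : Aperiodic G μ) :
    ∀ ε : ℝ, 0 < ε → ∃ A : Set X, MeasurableSet A ∧
      ENNReal.ofReal (Real.negMulLog (μ A).toReal) +
        ENNReal.ofReal (Real.negMulLog (μ Aᶜ).toReal) < ENNReal.ofReal ε ∧
      ∀ B : Set X, MeasurableSet B → (∀ g : G, (fun x => g • x) ⁻¹' B = B) →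
        ∃ C, MeasurableSet[sigmaG G {A, Aᶜ}] C ∧ μ (B ∆ C) = 0 := by
  intro ε hε
  have hI : invSigma G X ≤ mX := invSigma_le
  obtain ⟨δ, ⟨hδ0, hδ1⟩, hδε⟩ := exists_forall_mem_Icc_binEntropy_lt hε
  obtain ⟨φ, hφ, hφ_mem, hgen⟩ := exists_measurable_subsetMod_comap μ hI hδ0
  obtain ⟨A, hA, hAφ⟩ := exists_condExp_indicator_ae_eq hI
    (ae_nullSingletonClass_condExpKernel_invSigma hpmp hap) hφ
    fun x => ⟨(hφ_mem x).1.le, ((hφ_mem x).2.trans hδ1).le⟩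
  refine ⟨A, hA, ?_, fun B hB hBinv => ?_⟩
  · have hAδ : μ.real A ≤ δ := measureReal_le_of_condExp_indicator_le hI hA
      (hAφ.mono fun x hx => hx.trans_le (hφ_mem x).2.le)
    rw [ofReal_negMulLog_add_compl μ hA, ENNReal.ofReal_lt_ofReal_iff hε]
    exact hδε _ ⟨measureReal_nonneg, hAδ⟩
  · have hφS : AEStronglyMeasurable[sigmaG G {A, Aᶜ}] φ μ :=
      (aestronglyMeasurable_condExp_indicator_sigmaG hpmp (by simp [hA])
        (mem_insert A {Aᶜ})).congr hAφ
    exact hgen.of_comap_of_aestronglyMeasurable hφS B (measurableSet_invSigma_iff.2 ⟨hB, hBinv⟩)
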